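/- arXiv:2304.04856 — 5 statements merged into one kernel-verified Lean document; each statement's English description precedes it below -/
import Mathlib

section
/- Let (Ω, Σ, ℙ) be a probability space, A ⊆ ℝ^d a set, and Z : Ω → ℝ^d an integrable random variable with Z(ω) ∈ A for all ω ∈ Ω. Then the mean 𝔼[Z] = ∫ Z dℙ lies in the convex hull CH(A). -/
open MeasureTheory

/-!
Let `m` be the mean of an integrable `f` with values in a convex set `s`. If `m` were not interior
to `s`, a nonzero functional `φ` would satisfy `φ ≤ φ m` on `s`. But `φ m` is the mean of `φ ∘ f`,
so `φ ∘ f` equals `φ m` almost everywhere: `f` takes its values in a hyperplane through `m`, and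
induction on the dimension applies.
-/

section Separation

variable {E : Type*} [NormedAddCommGroup E] [NormedSpace ℝ E] [FiniteDimensional ℝ E]
  {s : Set E} {x : E}

theorem exists_ne_zero_forall_eq_of_convex_of_interior_eq_empty (hs : Convex ℝ s)
    (hne : s.Nonempty) (hint : interior s = ∅) :
    ∃ φ : StrongDual ℝ E, φ ≠ 0 ∧ ∀ y ∈ s, ∀ z ∈ s, φ y = φ z := by
  have hspan : vectorSpan ℝ s < ⊤ := by
    rwa [lt_top_iff_ne_top, Ne,
      ← AffineSubspace.affineSpan_eq_top_iff_vectorSpan_eq_top_of_nonempty ℝ E E hne,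
      ← hs.interior_nonempty_iff_affineSpan_eq_top, Set.not_nonempty_iff_eq_empty]
  obtain ⟨ψ, hψ, hker⟩ := Submodule.exists_le_ker_of_lt_top _ hspan
  refine ⟨ψ.toContinuousLinearMap, by simpa using hψ, fun y hy z hz => ?_⟩
  have hyz : ψ (y - z) = 0 := hker (vsub_mem_vectorSpan ℝ hy hz)
  simpa [sub_eq_zero] using hyz

theorem exists_ne_zero_forall_le_of_convex_of_notMem_interior (hs : Convex ℝ s)
    (hne : s.Nonempty) (hx : x ∉ interior s) :
    ∃ φ : StrongDual ℝ E, φ ≠ 0 ∧ ∀ y ∈ s, φ y ≤ φ x := by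
  rcases (interior s).eq_empty_or_nonempty with hint | hint
  · obtain ⟨φ, hφ, hconst⟩ := exists_ne_zero_forall_eq_of_convex_of_interior_eq_empty hs hne hint
    obtain ⟨z, hz⟩ := hne
    rcases le_total (φ z) (φ x) with hzx | hxz
    · exact ⟨φ, hφ, fun y hy => (hconst y hy z hz).trans_le hzx⟩
    · exact ⟨-φ, neg_ne_zero.mpr hφ, fun y hy => neg_le_neg (hxz.trans_eq (hconst z hz y hy))⟩
  · exact geometric_hahn_banach_of_nonempty_interior_point hs hx hint

end Separation

section Mean

variable {Ω E : Type*} [MeasurableSpace Ω] {μ : Measure Ω} [IsProbabilityMeasure μ]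
  [NormedAddCommGroup E] [NormedSpace ℝ E] {f : Ω → E}

theorem ae_apply_eq_apply_integral_of_ae_le [CompleteSpace E] (φ : StrongDual ℝ E)
    (hf : Integrable f μ) (hle : ∀ᵐ ω ∂μ, φ (f ω) ≤ φ (∫ ω', f ω' ∂μ)) :
    ∀ᵐ ω ∂μ, φ (f ω) = φ (∫ ω', f ω' ∂μ) := by
  refine (integral_eq_iff_of_ae_le (φ.integrable_comp hf) (integrable_const _) hle).mp ?_
  simp [φ.integral_comp_comm hf]

theorem integral_mem_of_convex_of_finiteDimensional [FiniteDimensional ℝ E] {s : Set E}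
    (hs : Convex ℝ s) (hfs : ∀ᵐ ω ∂μ, f ω ∈ s) (hf : Integrable f μ) : ∫ ω, f ω ∂μ ∈ s := by
  induction hn : Module.finrank ℝ E using Nat.strong_induction_on generalizing E with
  | _ n ih =>
  have : CompleteSpace E := FiniteDimensional.complete ℝ E
  set m := ∫ ω, f ω ∂μ with hm
  by_cases hint : m ∈ interior s
  · exact interior_subset hint
  obtain ⟨φ, hφ, hle⟩ := exists_ne_zero_forall_le_of_convex_of_notMem_interior hs
    (hfs.exists.imp' f fun _ => id) hint
  have hφf : ∀ᵐ ω ∂μ, φ (f ω) = φ m :=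
    ae_apply_eq_apply_integral_of_ae_le φ hf (hfs.mono fun ω => hle (f ω))
  have hrank : Module.finrank ℝ φ.ker < n :=
    hn ▸ Submodule.finrank_lt fun h =>
      hφ (ContinuousLinearMap.coe_injective (LinearMap.ker_eq_top.mp h))
  obtain ⟨P, hP⟩ := φ.ker_closedComplemented_of_finiteDimensional_range
  have hcentered : Integrable (fun ω => f ω - m) μ := hf.sub (integrable_const m)
  have hmean : ∫ ω, P (f ω - m) ∂μ = 0 := by
    rw [P.integral_comp_comm hcentered, integral_sub hf (integrable_const m)]
    simp [← hm]
  have hslice : ∀ᵐ ω ∂μ, P (f ω - m) ∈ φ.ker.subtype ⁻¹' ((fun x => x + m) ⁻¹' s) := by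
    filter_upwards [hfs, hφf] with ω hωs hωφ
    have hker : f ω - m ∈ φ.ker := by simp [hωφ]
    simpa [hP ⟨f ω - m, hker⟩] using hωs
  have hzero := ih _ hrank ((hs.translate_preimage_left m).linear_preimage φ.ker.subtype) hslice
    (P.integrable_comp hcentered) rfl
  rw [hmean] at hzero
  simpa using hzero

theorem stmt_2_general [FiniteDimensional ℝ E] {A : Set E} (hf : Integrable f μ)
    (hfA : ∀ᵐ ω ∂μ, f ω ∈ A) : ∫ ω, f ω ∂μ ∈ convexHull ℝ A :=
  integral_mem_of_convex_of_finiteDimensional (convex_convexHull ℝ A)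
    (hfA.mono fun _ hω => subset_convexHull ℝ A hω) hf

end Mean

/-- The mean of an integrable `ℝ^d`-valued random variable taking values in a
set `A` lies in the convex hull of `A`. -/
theorem stmt_2 {Ω : Type*} [MeasurableSpace Ω] (ℙ : Measure Ω) [IsProbabilityMeasure ℙ]
    (d : ℕ) (A : Set (Fin d → ℝ)) (Z : Ω → Fin d → ℝ)
    (hZint : Integrable Z ℙ) (hZA : ∀ ω, Z ω ∈ A) :
    (∫ ω, Z ω ∂ℙ) ∈ convexHull ℝ A :=
  stmt_2_general hZint (ae_of_all ℙ hZA)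
end

section
/- (Graph convex hull bounds, finite-dimensional case.) Let (Ω, Σ, ℙ) be a probability space, K ⊆ ℝ^m, f : K → ℝ, and X : Ω → K a random variable such that X and f∘X are integrable. Let g_l, g_u : CH(K) → [-∞, ∞] be functions such that for every x ∈ CH(K), the slice CH(G(f))|_x is contained in {y ∈ ℝ : g_l(x) ≤ y ≤ g_u(x)}. Then 𝔼[X] ∈ CH(K) and g_l(𝔼[X]) ≤ 𝔼[f(X)] ≤ g_u(𝔼[X]). -/
open MeasureTheory

/-!
A convex set in finite dimension need not be closed, so Jensen-type arguments by closed half-spaces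
only place the mean `x` of a random vector `Z` in the closure of the set. Instead, take the smallest
subspace `V` with `Z - x ∈ V` almost surely. If `x` were outside the convex set `s`, some functional
`l` would satisfy `l ≤ l x` on `s ∩ (x + V)` without being constantly `l x` there. As `l (Z - x)` is
nonpositive with mean zero, it vanishes almost surely, so `V ∩ ker l` is a smaller such subspace.
Applied to `(X, f(X))` and the convex hull of the graph of `f`, this gives the envelope bounds.
-/

section Separation

theorem exists_dual_ne_zero_forall_eq_of_affineSpan_ne_top {k V : Type*} [Field k] [AddCommGroup V]
    [Module k V] {s : Set V} (hne : s.Nonempty) (hspan : affineSpan k s ≠ ⊤) :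
    ∃ l : Module.Dual k V, l ≠ 0 ∧ ∀ y ∈ s, ∀ z ∈ s, l y = l z := by
  rw [Ne, AffineSubspace.affineSpan_eq_top_iff_vectorSpan_eq_top_of_nonempty k V V hne] at hspan
  obtain ⟨l, hl, hker⟩ := Submodule.exists_le_ker_of_lt_top _ (lt_top_iff_ne_top.2 hspan)
  refine ⟨l, hl, fun y hy z hz => ?_⟩
  simpa [sub_eq_zero] using hker (vsub_mem_vectorSpan k hy hz)

variable {E : Type*} [NormedAddCommGroup E] [NormedSpace ℝ E] [FiniteDimensional ℝ E]
  {s : Set E} {x : E}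

theorem exists_ne_zero_forall_le_of_notMem (hs : Convex ℝ s) (hne : s.Nonempty) (hx : x ∉ s) :
    ∃ l : E →L[ℝ] ℝ, l ≠ 0 ∧ ∀ z ∈ s, l z ≤ l x := by
  by_cases hspan : affineSpan ℝ s = ⊤
  · exact geometric_hahn_banach_of_nonempty_interior_point hs (fun h => hx (interior_subset h))
      (hs.interior_nonempty_iff_affineSpan_eq_top.2 hspan)
  · obtain ⟨l, hl, hconst⟩ := exists_dual_ne_zero_forall_eq_of_affineSpan_ne_top hne hspan
    have hl' : l.toContinuousLinearMap ≠ 0 := by simpa using hl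
    obtain ⟨y, hy⟩ := hne
    rcases le_total (l y) (l x) with hyx | hxy
    · exact ⟨l.toContinuousLinearMap, hl', fun z hz => (hconst z hz y hy).trans_le hyx⟩
    · exact ⟨-l.toContinuousLinearMap, neg_ne_zero.2 hl',
        fun z hz => neg_le_neg (hxy.trans_eq (hconst y hy z hz))⟩

-- Separate weakly inside the span of `s - x`: a nonzero functional there cannot vanish on `s - x`.
theorem exists_forall_le_and_exists_lt_of_notMem (hs : Convex ℝ s) (hne : s.Nonempty)
    (hx : x ∉ s) :
    ∃ l : E →L[ℝ] ℝ, (∀ z ∈ s, l z ≤ l x) ∧ ∃ z ∈ s, l z < l x := by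
  let V : Submodule ℝ E := Submodule.span ℝ ((· - x) '' s)
  have hV : ∀ z ∈ s, z - x ∈ V := fun z hz => Submodule.subset_span ⟨z, hz, rfl⟩
  let t : Set V := V.subtype ⁻¹' ((x + ·) ⁻¹' s)
  have ht : Convex ℝ t := (hs.translate_preimage_right x).linear_preimage V.subtype
  have mem_t : ∀ z (hz : z ∈ s), (⟨z - x, hV z hz⟩ : V) ∈ t := fun z hz => by simpa [t] using hz
  obtain ⟨k, hk, hkt⟩ := exists_ne_zero_forall_le_of_notMem ht
    (hne.elim fun z hz => ⟨_, mem_t z hz⟩) (x := 0) (by simpa [t] using hx)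
  obtain ⟨l, hl⟩ := k.toLinearMap.exists_extend
  have l_sub : ∀ z (hz : z ∈ s), l z - l x = k ⟨z - x, hV z hz⟩ := fun z hz => by
    rw [← map_sub]
    exact LinearMap.congr_fun hl ⟨z - x, hV z hz⟩
  have hle : ∀ z ∈ s, l z ≤ l x := fun z hz => by
    simpa [← l_sub z hz] using hkt _ (mem_t z hz)
  refine ⟨l.toContinuousLinearMap, hle, ?_⟩
  by_contra! hge
  have hV_ker : V ≤ LinearMap.ker l := Submodule.span_le.2 <| by
    rintro _ ⟨z, hz, rfl⟩
    simpa [sub_eq_zero] using (hle z hz).antisymm (hge z hz)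
  refine hk (ContinuousLinearMap.ext fun v => ?_)
  exact (LinearMap.congr_fun hl v).symm.trans (hV_ker v.2)

end Separation

section Integral

variable {Ω : Type*} [MeasurableSpace Ω] {μ : Measure Ω} [IsProbabilityMeasure μ]
  {E : Type*} [NormedAddCommGroup E] [NormedSpace ℝ E]

theorem ae_apply_eq_apply_integral_of_ae_le_s6 [CompleteSpace E] {Z : Ω → E} (hZ : Integrable Z μ)
    (l : E →L[ℝ] ℝ) (hle : ∀ᵐ ω ∂μ, l (Z ω) ≤ l (∫ ω, Z ω ∂μ)) :
    ∀ᵐ ω ∂μ, l (Z ω) = l (∫ ω, Z ω ∂μ) := by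
  refine (integral_eq_iff_of_ae_le (l.integrable_comp hZ) (integrable_const _) hle).1 ?_
  simp [l.integral_comp_comm hZ]

variable [FiniteDimensional ℝ E]

theorem integral_mem_of_convex {s : Set E} (hs : Convex ℝ s) {Z : Ω → E} (hZ : Integrable Z μ)
    (hZs : ∀ᵐ ω ∂μ, Z ω ∈ s) : ∫ ω, Z ω ∂μ ∈ s := by
  by_contra hx
  set x := ∫ ω, Z ω ∂μ
  obtain ⟨V, hZV, hV_min⟩ := exists_minimal_of_wellFoundedLT
    (fun V : Submodule ℝ E => ∀ᵐ ω ∂μ, Z ω - x ∈ V) ⟨⊤, by simp⟩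
  have hZsV : ∀ᵐ ω ∂μ, Z ω ∈ s ∩ (· - x) ⁻¹' V := hZs.and hZV
  have hsV : Convex ℝ (s ∩ (· - x) ⁻¹' V) := by
    simpa only [sub_eq_add_neg] using hs.inter (V.convex.translate_preimage_left (-x))
  obtain ⟨l, hle, z, ⟨-, hzV⟩, hlt⟩ := exists_forall_le_and_exists_lt_of_notMem hsV
    (hZsV.exists.imp' Z fun _ => id) (fun h => hx h.1)
  have hlZ : ∀ᵐ ω ∂μ, l (Z ω) = l x :=
    ae_apply_eq_apply_integral_of_ae_le_s6 hZ l (hZsV.mono fun ω => hle (Z ω))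
  have hZ_ker : ∀ᵐ ω ∂μ, Z ω - x ∈ V ⊓ l.ker := by
    filter_upwards [hZV, hlZ] with ω hωV hlω using ⟨hωV, by simp [hlω]⟩
  have hlz : l (z - x) = 0 := (hV_min hZ_ker inf_le_left hzV).2
  exact hlt.ne (by simpa [sub_eq_zero] using hlz)

theorem integral_prodMk_mem_convexHull_graphOn {F : Type*} [NormedAddCommGroup F] [NormedSpace ℝ F]
    [FiniteDimensional ℝ F] {K : Set E} {f : E → F} {X : Ω → E} (hX : Integrable X μ)
    (hfX : Integrable (fun ω => f (X ω)) μ) (hXK : ∀ᵐ ω ∂μ, X ω ∈ K) :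
    (∫ ω, X ω ∂μ, ∫ ω, f (X ω) ∂μ) ∈ convexHull ℝ (K.graphOn f) := by
  rw [← integral_pair hX hfX]
  exact integral_mem_of_convex (convex_convexHull ℝ _) (hX.prodMk hfX)
    (hXK.mono fun ω hω => subset_convexHull ℝ _ ⟨X ω, hω, rfl⟩)

theorem stmt_6_general {K : Set E} {f : E → ℝ} {X : Ω → E} (hX : Integrable X μ)
    (hfX : Integrable (fun ω => f (X ω)) μ) (hXK : ∀ᵐ ω ∂μ, X ω ∈ K) {gl gu : E → EReal}
    (henv : ∀ x ∈ convexHull ℝ K, ∀ y : ℝ,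
      (x, y) ∈ convexHull ℝ (K.graphOn f) → gl x ≤ (y : EReal) ∧ (y : EReal) ≤ gu x) :
    (∫ ω, X ω ∂μ) ∈ convexHull ℝ K ∧
    gl (∫ ω, X ω ∂μ) ≤ ((∫ ω, f (X ω) ∂μ : ℝ) : EReal) ∧
    ((∫ ω, f (X ω) ∂μ : ℝ) : EReal) ≤ gu (∫ ω, X ω ∂μ) := by
  have hmean : ∫ ω, X ω ∂μ ∈ convexHull ℝ K :=
    integral_mem_of_convex (convex_convexHull ℝ K) hX
      (hXK.mono fun _ hω => subset_convexHull ℝ K hω)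
  exact ⟨hmean, henv _ hmean _ (integral_prodMk_mem_convexHull_graphOn hX hfX hXK)⟩

end Integral

/-- Graph convex hull bounds, finite-dimensional case. If the slices of the
convex hull of the graph of `f` are enclosed between envelope functions `g_l, g_u` (with
values in the extended reals), then `𝔼[X] ∈ CH(K)` and
`g_l(𝔼[X]) ≤ 𝔼[f(X)] ≤ g_u(𝔼[X])`. -/
theorem stmt_6 {Ω : Type*} [MeasurableSpace Ω] (ℙ : Measure Ω) [IsProbabilityMeasure ℙ]
    (m : ℕ) (K : Set (Fin m → ℝ)) (f : (Fin m → ℝ) → ℝ)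
    (X : Ω → Fin m → ℝ) (hXK : ∀ ω, X ω ∈ K)
    (hXint : Integrable X ℙ) (hfXint : Integrable (fun ω => f (X ω)) ℙ)
    (gl gu : (Fin m → ℝ) → EReal)
    (henv : ∀ x ∈ convexHull ℝ K, ∀ y : ℝ,
      (x, y) ∈ convexHull ℝ ((fun x => (x, f x)) '' K) →
      gl x ≤ (y : EReal) ∧ (y : EReal) ≤ gu x) :
    (∫ ω, X ω ∂ℙ) ∈ convexHull ℝ K ∧
    gl (∫ ω, X ω ∂ℙ) ≤ ((∫ ω, f (X ω) ∂ℙ : ℝ) : EReal) ∧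
    ((∫ ω, f (X ω) ∂ℙ : ℝ) : EReal) ≤ gu (∫ ω, X ω ∂ℙ) := by
  exact stmt_6_general hXint hfXint (.of_forall hXK) henv
end

section
/- (Graph convex hull bounds, Banach space case.) Let (Ω, Σ, ℙ) be a probability space, 𝒳 a real Banach space, K ⊆ 𝒳, f : K → ℝ, and X : Ω → K such that X and f∘X are Bochner integrable. Let g_l, g_u : closure(CH(K)) → [-∞, ∞] be functions such that for every x ∈ closure(CH(K)), the slice (closure CH(G(f)))|_x is contained in {y ∈ ℝ : g_l(x) ≤ y ≤ g_u(x)}. Then 𝔼[X] ∈ closure(CH(K)) and g_l(𝔼[X]) ≤ 𝔼[f(X)] ≤ g_u(𝔼[X]). -/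
open MeasureTheory

section ClosedConvexHull

variable {Ω E F : Type*} [MeasurableSpace Ω] {μ : Measure Ω} [IsProbabilityMeasure μ]
  [NormedAddCommGroup E] [NormedSpace ℝ E] [CompleteSpace E]
  [NormedAddCommGroup F] [NormedSpace ℝ F] [CompleteSpace F]
  {s : Set E} {X : Ω → E}

theorem integral_mem_closure_convexHull (hXs : ∀ᵐ ω ∂μ, X ω ∈ s) (hX : Integrable X μ) :
    ∫ ω, X ω ∂μ ∈ closure (convexHull ℝ s) :=
  (convex_convexHull ℝ s).closure.integral_mem isClosed_closure
    (hXs.mono fun _ hω => subset_closure (subset_convexHull ℝ s hω)) hX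

theorem integral_prodMk_mem_closure_convexHull_graphOn {f : E → F}
    (hXs : ∀ᵐ ω ∂μ, X ω ∈ s) (hX : Integrable X μ) (hfX : Integrable (fun ω => f (X ω)) μ) :
    (∫ ω, X ω ∂μ, ∫ ω, f (X ω) ∂μ) ∈ closure (convexHull ℝ (s.graphOn f)) := by
  have hgraph : ∀ᵐ ω ∂μ, (X ω, f (X ω)) ∈ s.graphOn f :=
    hXs.mono fun _ hω => Set.mem_image_of_mem _ hω
  rw [← integral_pair hX hfX]
  exact integral_mem_closure_convexHull hgraph (hX.prodMk hfX)

end ClosedConvexHull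

/-- Graph convex hull bounds, Banach space case. If the slices of the closure of
the convex hull of the graph of `f` are enclosed between envelope functions `g_l, g_u` (with
values in the extended reals), then `𝔼[X] ∈ closure(CH(K))` and
`g_l(𝔼[X]) ≤ 𝔼[f(X)] ≤ g_u(𝔼[X])`. -/
theorem stmt_7 {Ω : Type*} [MeasurableSpace Ω] (ℙ : Measure Ω) [IsProbabilityMeasure ℙ]
    {𝒳 : Type*} [NormedAddCommGroup 𝒳] [NormedSpace ℝ 𝒳] [CompleteSpace 𝒳]
    (K : Set 𝒳) (f : 𝒳 → ℝ)
    (X : Ω → 𝒳) (hXK : ∀ ω, X ω ∈ K)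
    (hXint : Integrable X ℙ) (hfXint : Integrable (fun ω => f (X ω)) ℙ)
    (gl gu : 𝒳 → EReal)
    (henv : ∀ x ∈ closure (convexHull ℝ K), ∀ y : ℝ,
      (x, y) ∈ closure (convexHull ℝ ((fun x => (x, f x)) '' K)) →
      gl x ≤ (y : EReal) ∧ (y : EReal) ≤ gu x) :
    (∫ ω, X ω ∂ℙ) ∈ closure (convexHull ℝ K) ∧
    gl (∫ ω, X ω ∂ℙ) ≤ ((∫ ω, f (X ω) ∂ℙ : ℝ) : EReal) ∧
    ((∫ ω, f (X ω) ∂ℙ : ℝ) : EReal) ≤ gu (∫ ω, X ω ∂ℙ) := by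
  have hae : ∀ᵐ ω ∂ℙ, X ω ∈ K := .of_forall hXK
  have hmem : ∫ ω, X ω ∂ℙ ∈ closure (convexHull ℝ K) :=
    integral_mem_closure_convexHull hae hXint
  exact ⟨hmem, henv _ hmem _ (integral_prodMk_mem_closure_convexHull_graphOn hae hXint hfXint)⟩
end

section
/- (Sharpness of the graph convex hull bounds.) Let K ⊆ ℝ^m and f : K → ℝ. Define g_l(x) = inf(CH(G(f))|_x) and g_u(x) = sup(CH(G(f))|_x) for x ∈ CH(K) (infimum and supremum in the extended reals). Then for every x ∈ CH(K) and every y ∈ ℝ with g_l(x) < y < g_u(x), there exist a probability space (Ω̃, Σ̃, ℙ̃) and a random variable X̃ : Ω̃ → K such that X̃ and f∘X̃ are integrable, 𝔼[X̃] = x, and 𝔼[f(X̃)] = y. -/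
open MeasureTheory

/-!
Reading convex weights as probabilities, a point of the convex hull of the graph of `f` is the pair
of means of `X` and `f(X)` for some finitely supported `X`. So it suffices that `(x, y)` lies in
that hull; and the slice of the hull over `x` is an interval, hence contains every real number
strictly between its infimum and its supremum.
-/

theorem mem_of_sInf_image_lt_of_lt_sSup_image {α β : Type*} [LinearOrder α]
    [CompleteLinearOrder β] {e : α → β} (he : Monotone e) {s : Set α} (hs : s.OrdConnected)
    {a : α} (h_inf : sInf (e '' s) < e a) (h_sup : e a < sSup (e '' s)) : a ∈ s := by
  obtain ⟨_, ⟨l, hl, rfl⟩, hla⟩ := sInf_lt_iff.1 h_inf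
  obtain ⟨_, ⟨u, hu, rfl⟩, hau⟩ := lt_sSup_iff.1 h_sup
  exact hs.out hl hu ⟨(he.reflect_lt hla).le, (he.reflect_lt hau).le⟩

theorem convex_prodMk_preimage {𝕜 E F : Type*} [Ring 𝕜] [PartialOrder 𝕜] [AddCommGroup E]
    [Module 𝕜 E] [AddCommGroup F] [Module 𝕜 F] {M : Set (E × F)} (hM : Convex 𝕜 M) (x : E) :
    Convex 𝕜 (Prod.mk x ⁻¹' M) :=
  hM.affine_preimage ((AffineMap.const 𝕜 F x).prod (AffineMap.id 𝕜 F))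

theorem exists_pmf_sum_smul_eq_of_mem_convexHull {E : Type*} [AddCommGroup E] [Module ℝ E]
    {s : Set E} {x : E} (hx : x ∈ convexHull ℝ s) :
    ∃ (ι : Type) (_ : Fintype ι) (p : PMF ι) (z : ι → E),
      (∀ i, z i ∈ s) ∧ ∑ i, (p i).toReal • z i = x := by
  obtain ⟨ι, _, w, z, hw₀, hw₁, hz, rfl⟩ := mem_convexHull_iff_exists_fintype.1 hx
  have hw : ∑ i, ENNReal.ofReal (w i) = 1 := by
    rw [← ENNReal.ofReal_sum_of_nonneg fun i _ => hw₀ i, hw₁, ENNReal.ofReal_one]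
  refine ⟨ι, inferInstance, PMF.ofFintype _ hw, z, hz, ?_⟩
  simp only [PMF.ofFintype_apply, ENNReal.toReal_ofReal (hw₀ _)]

theorem exists_integral_eq_of_mem_convexHull_graphOn {E F : Type*}
    [NormedAddCommGroup E] [NormedSpace ℝ E] [CompleteSpace E]
    [NormedAddCommGroup F] [NormedSpace ℝ F] [CompleteSpace F]
    {K : Set E} {f : E → F} {x : E} {y : F} (hxy : (x, y) ∈ convexHull ℝ (K.graphOn f)) :
    ∃ (Ω : Type) (_ : MeasurableSpace Ω) (μ : Measure Ω), IsProbabilityMeasure μ ∧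
      ∃ X : Ω → E, (∀ ω, X ω ∈ K) ∧ Integrable X μ ∧ Integrable (fun ω => f (X ω)) μ ∧
        ∫ ω, X ω ∂μ = x ∧ ∫ ω, f (X ω) ∂μ = y := by
  obtain ⟨Ω, _, p, Z, hZ, hZ_sum⟩ := exists_pmf_sum_smul_eq_of_mem_convexHull hxy
  choose X hXK hXZ using hZ
  obtain rfl : (fun ω => (X ω, f (X ω))) = Z := funext hXZ
  let _ : MeasurableSpace Ω := ⊤
  have hX : Integrable X p.toMeasure := .of_finite
  have hfX : Integrable (fun ω => f (X ω)) p.toMeasure := .of_finite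
  rw [← PMF.integral_eq_sum, integral_pair hX hfX, Prod.mk.injEq] at hZ_sum
  exact ⟨Ω, _, p.toMeasure, inferInstance, X, hXK, hX, hfX, hZ_sum⟩

theorem stmt_8_general {E : Type*} [NormedAddCommGroup E] [NormedSpace ℝ E] [CompleteSpace E]
    (K : Set E) (f : E → ℝ) (x : E) (y : ℝ)
    (hyl : sInf (Real.toEReal '' (Prod.mk x ⁻¹' convexHull ℝ (K.graphOn f))) < (y : EReal))
    (hyu : (y : EReal) < sSup (Real.toEReal '' (Prod.mk x ⁻¹' convexHull ℝ (K.graphOn f)))) :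
    ∃ (Ω : Type) (_ : MeasurableSpace Ω) (μ : Measure Ω), IsProbabilityMeasure μ ∧
      ∃ X : Ω → E, (∀ ω, X ω ∈ K) ∧ Integrable X μ ∧ Integrable (fun ω => f (X ω)) μ ∧
        ∫ ω, X ω ∂μ = x ∧ ∫ ω, f (X ω) ∂μ = y := by
  have h_slice : (Prod.mk x ⁻¹' convexHull ℝ (K.graphOn f)).OrdConnected :=
    (convex_prodMk_preimage (convex_convexHull ℝ _) x).ordConnected
  have hxy : (x, y) ∈ convexHull ℝ (K.graphOn f) :=
    mem_of_sInf_image_lt_of_lt_sSup_image EReal.coe_strictMono.monotone h_slice hyl hyu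
  exact exists_integral_eq_of_mem_convexHull_graphOn hxy

/-- Sharpness of the graph convex hull bounds. With
`g_l(x) = inf(CH(G(f))|_x)` and `g_u(x) = sup(CH(G(f))|_x)` (in the extended reals),
for every `x ∈ CH(K)` and real `y` with `g_l(x) < y < g_u(x)` there is a probability space
and a `K`-valued random variable `X̃` with `𝔼[X̃] = x` and `𝔼[f(X̃)] = y`. -/
theorem stmt_8 (m : ℕ) (K : Set (Fin m → ℝ)) (f : (Fin m → ℝ) → ℝ)
    (x : Fin m → ℝ) (hx : x ∈ convexHull ℝ K) (y : ℝ)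
    (hyl : sInf ((fun y : ℝ => (y : EReal)) ''
        {y : ℝ | (x, y) ∈ convexHull ℝ ((fun x => (x, f x)) '' K)}) < (y : EReal))
    (hyu : (y : EReal) < sSup ((fun y : ℝ => (y : EReal)) ''
        {y : ℝ | (x, y) ∈ convexHull ℝ ((fun x => (x, f x)) '' K)})) :
    ∃ (Ω' : Type) (_ : MeasurableSpace Ω') (ℙ' : Measure Ω'),
      IsProbabilityMeasure ℙ' ∧
      ∃ X' : Ω' → Fin m → ℝ, (∀ ω, X' ω ∈ K) ∧
        Integrable X' ℙ' ∧ Integrable (fun ω => f (X' ω)) ℙ' ∧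
        (∫ ω, X' ω ∂ℙ') = x ∧ (∫ ω, f (X' ω) ∂ℙ') = y :=
  stmt_8_general K f x y hyl hyu
end

section
/- Let (Ω, Σ, ℙ) be a probability space, 𝒳 a real Banach space, K ⊆ 𝒳, f : K → ℝ, X : Ω → K a random variable such that X and f∘X are Bochner integrable, and ℱ ⊆ Σ a sub-σ-algebra. Then the pair (𝔼[X | ℱ](ω), 𝔼[f(X) | ℱ](ω)) lies in closure(CH(G(f))) for ℙ-almost every ω ∈ Ω. -/
open MeasureTheory

section

variable {Ω E F : Type*} {m m0 : MeasurableSpace Ω} {μ : Measure Ω}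
  [NormedAddCommGroup E] [NormedSpace ℝ E] [CompleteSpace E]
  [NormedAddCommGroup F] [NormedSpace ℝ F] [CompleteSpace F]

theorem condExp_prodMk {X : Ω → E} {Y : Ω → F} (hX : Integrable X μ) (hY : Integrable Y μ) :
    μ[fun ω => (X ω, Y ω)|m] =ᵐ[μ] fun ω => ((μ[X|m]) ω, (μ[Y|m]) ω) := by
  have hXY : Integrable (fun ω => (X ω, Y ω)) μ := hX.prodMk hY
  filter_upwards [(ContinuousLinearMap.fst ℝ E F).comp_condExp_comm (m := m) hXY,
    (ContinuousLinearMap.snd ℝ E F).comp_condExp_comm (m := m) hXY] with ω hfst hsnd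
  exact Prod.ext hfst hsnd

theorem condExp_mem_closure_convexHull (hm : m ≤ m0) [SigmaFinite (μ.trim hm)] {s : Set E}
    {X : Ω → E} (hX : Integrable X μ) (hXs : ∀ᵐ ω ∂μ, X ω ∈ s) :
    ∀ᵐ ω ∂μ, (μ[X|m]) ω ∈ closure (convexHull ℝ s) :=
  (convex_convexHull ℝ s).closure.condExp_mem hm hX isClosed_closure <|
    hXs.mono fun _ hω => subset_closure (subset_convexHull ℝ s hω)

theorem stmt_18_general (hm : m ≤ m0) [SigmaFinite (μ.trim hm)] {K : Set E} {f : E → F}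
    {X : Ω → E} (hXK : ∀ᵐ ω ∂μ, X ω ∈ K) (hX : Integrable X μ)
    (hfX : Integrable (fun ω => f (X ω)) μ) :
    ∀ᵐ ω ∂μ, ((μ[X|m]) ω, (μ[fun ω' => f (X ω')|m]) ω) ∈
      closure (convexHull ℝ (K.graphOn f)) := by
  have hgraph : ∀ᵐ ω ∂μ, (X ω, f (X ω)) ∈ K.graphOn f :=
    hXK.mono fun _ hω => Set.mem_graphOn.2 ⟨hω, rfl⟩
  filter_upwards [condExp_prodMk (m := m) hX hfX,
    condExp_mem_closure_convexHull hm (hX.prodMk hfX) hgraph] with ω hpair hmem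
  rwa [← hpair]

end

/-- the pair `(𝔼[X|ℱ](ω), 𝔼[f(X)|ℱ](ω))` lies in the closure of the convex
hull of the graph of `f`, for ℙ-almost every `ω`. -/
theorem stmt_18 {Ω : Type*} {m0 : MeasurableSpace Ω} (ℙ : Measure Ω) [IsProbabilityMeasure ℙ]
    {𝒳 : Type*} [NormedAddCommGroup 𝒳] [NormedSpace ℝ 𝒳] [CompleteSpace 𝒳]
    (K : Set 𝒳) (f : 𝒳 → ℝ)
    (X : Ω → 𝒳) (hXK : ∀ ω, X ω ∈ K)
    (hXint : Integrable X ℙ) (hfXint : Integrable (fun ω => f (X ω)) ℙ)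
    (m : MeasurableSpace Ω) (hm : m ≤ m0) :
    ∀ᵐ ω ∂ℙ, ((ℙ[X|m]) ω, (ℙ[fun ω' => f (X ω')|m]) ω) ∈
      closure (convexHull ℝ ((fun x => (x, f x)) '' K)) :=
  stmt_18_general hm (.of_forall hXK) hXint hfXint
end
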